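/- For all real numbers c, d, e, the polynomial maps F(x,y) = (x, xy + y⁶ + cy⁷ + dy⁸ + ey⁹) and G(x,y) = (x, xy + y⁶ + (d − (3/5)c²)y⁸ + (e − (7/5)cd + (14/25)c³)y⁹) have A⁹-equivalent 9-jets at the origin: j⁹F(0) ∼_{A⁹} j⁹G(0). -/

import Mathlib

open Filter Topology

noncomputable section

/-- Directional derivative of a scalar function. -/
def dop (v : ℝ × ℝ) (g : ℝ × ℝ → ℝ) : ℝ × ℝ → ℝ :=
  fun p => fderiv ℝ g p v

/-- Partial derivative operator in the first coordinate. -/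
def pdx : (ℝ × ℝ → ℝ) → ℝ × ℝ → ℝ := dop (1, 0)

/-- Partial derivative operator in the second coordinate. -/
def pdy : (ℝ × ℝ → ℝ) → ℝ × ℝ → ℝ := dop (0, 1)

/-- Taylor coefficient `a_{ij} = ∂_x^i ∂_y^j g(0,0) / (i! j!)` of `g` at the origin. -/
def tcoeff (g : ℝ × ℝ → ℝ) (i j : ℕ) : ℝ :=
  (pdx^[i] (pdy^[j] g)) 0 / (Nat.factorial i * Nat.factorial j)

/-- The Jacobian determinant `λ_f` of a map `f : ℝ² → ℝ²`. -/
def jacDet (f : ℝ × ℝ → ℝ × ℝ) (p : ℝ × ℝ) : ℝ :=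
  (fderiv ℝ f p (1, 0)).1 * (fderiv ℝ f p (0, 1)).2 -
    (fderiv ℝ f p (1, 0)).2 * (fderiv ℝ f p (0, 1)).1

/-- `f` has corank one at `0` : the derivative of `f` at `0` has rank one. -/
def CorankOne (f : ℝ × ℝ → ℝ × ℝ) : Prop :=
  LinearMap.rank ((fderiv ℝ f 0).toLinearMap) = 1

/-- `η` is a null vector field for `f` near `0`. -/
def IsNullVF (f η : ℝ × ℝ → ℝ × ℝ) : Prop :=
  η 0 ≠ 0 ∧ ∃ U ∈ 𝓝 (0 : ℝ × ℝ),
    ContDiffOn ℝ (⊤ : ℕ∞) η U ∧ ∀ p ∈ U, jacDet f p = 0 → fderiv ℝ f p (η p) = 0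

/-- The derivative `(ηg)(p) = Dg(p)(η(p))` of `g` along the vector field `η`. -/
def etaD (η : ℝ × ℝ → ℝ × ℝ) (g : ℝ × ℝ → ℝ) : ℝ × ℝ → ℝ :=
  fun p => fderiv ℝ g p (η p)

/-- The iterated derivative `η^k g` along the vector field `η`. -/
def etaIter (η : ℝ × ℝ → ℝ × ℝ) : ℕ → (ℝ × ℝ → ℝ) → ℝ × ℝ → ℝ
  | 0, g => g
  | k + 1, g => etaD η (etaIter η k g)

/-- The Hessian matrix of second partial derivatives of `g` at `0`. -/
def hess (g : ℝ × ℝ → ℝ) : Matrix (Fin 2) (Fin 2) ℝ :=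
  !![pdx (pdx g) 0, pdx (pdy g) 0; pdy (pdx g) 0, pdy (pdy g) 0]

/-- `A^r`-equivalence of the `r`-jets at `0` of two map-germs `(ℝ²,0) → (ℝ²,0)`. -/
def JetEquiv (r : ℕ) (f g : ℝ × ℝ → ℝ × ℝ) : Prop :=
  ∃ φ ψ : ℝ × ℝ → ℝ × ℝ,
    ContDiff ℝ (⊤ : ℕ∞) φ ∧ ContDiff ℝ (⊤ : ℕ∞) ψ ∧ φ 0 = 0 ∧ ψ 0 = 0 ∧
    Function.Bijective (⇑(fderiv ℝ φ 0)) ∧ Function.Bijective (⇑(fderiv ℝ ψ 0)) ∧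
    ∀ i ≤ r, iteratedFDeriv ℝ i (ψ ∘ f ∘ φ) 0 = iteratedFDeriv ℝ i g 0

/-- `A`-equivalence of two map-germs `(ℝ²,0) → (ℝ²,0)`. -/
def AEquiv (f g : ℝ × ℝ → ℝ × ℝ) : Prop :=
  ∃ φ ψ : ℝ × ℝ → ℝ × ℝ,
    ContDiff ℝ (⊤ : ℕ∞) φ ∧ ContDiff ℝ (⊤ : ℕ∞) ψ ∧ φ 0 = 0 ∧ ψ 0 = 0 ∧
    Function.Bijective (⇑(fderiv ℝ φ 0)) ∧ Function.Bijective (⇑(fderiv ℝ ψ 0)) ∧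
    ∀ᶠ p in 𝓝 (0 : ℝ × ℝ), ψ (f (φ p)) = g p

/-- `f` has the form `(x, g(x,y))` where `g` is `C^∞` and the Taylor coefficients of `g`
of total degree `< N` at the origin are prescribed by `P`. -/
def HasForm (f : ℝ × ℝ → ℝ × ℝ) (g : ℝ × ℝ → ℝ) (N : ℕ) (P : ℕ → ℕ → ℝ) : Prop :=
  ContDiff ℝ (⊤ : ℕ∞) g ∧ (∀ p, f p = (p.1, g p)) ∧
    ∀ i j, i + j < N → tcoeff g i j = P i j

/-!
For fixed `y` the map `(x, y) ↦ (x, x y + f y)` parametrises the line of slope `y` and intercept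
`f y`. The shear `(X, Y) ↦ (X + a Y, Y)` of the target carries lines to lines: the slope `y` becomes
`s = y / (1 + a y)`, and in terms of the new slope the intercept is `(1 - a s) f (s / (1 - a s))`.
So these two families of lines are `A`-equivalent. For `f = y⁶ + c y⁷ + d y⁸ + e y⁹` the new
intercept is `y⁶ + (c + 5 a) y⁷ + ⋯`, and `a = -c/5` removes the term of degree seven.
-/

section VanishingOrder

variable {𝕜 E F : Type*} [NontriviallyNormedField 𝕜] [NormedAddCommGroup E] [NormedSpace 𝕜 E]
  [NormedAddCommGroup F] [NormedSpace 𝕜 F] {x : E}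

theorem norm_iteratedFDeriv_smul_le_of_contDiffAt {f : E → 𝕜} {g : E → F} {n : ℕ}
    (hf : ContDiffAt 𝕜 n f x) (hg : ContDiffAt 𝕜 n g x) :
    ‖iteratedFDeriv 𝕜 n (fun y => f y • g y) x‖ ≤ ∑ i ∈ Finset.range (n + 1),
      (n.choose i : ℝ) * ‖iteratedFDeriv 𝕜 i f x‖ * ‖iteratedFDeriv 𝕜 (n - i) g x‖ := by
  have hfg : ∀ᶠ y in 𝓝 x, ContDiffAt 𝕜 n f y ∧ ContDiffAt 𝕜 n g y :=
    (hf.eventually (by simp)).and (hg.eventually (by simp))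
  obtain ⟨U, hU, hUo, hxU⟩ := eventually_nhds_iff.1 hfg
  have h := norm_iteratedFDerivWithin_smul_le (fun y hy => (hU y hy).1.contDiffWithinAt)
    (fun y hy => (hU y hy).2.contDiffWithinAt) hUo.uniqueDiffOn hxU le_rfl
  simpa only [iteratedFDerivWithin_of_isOpen _ hUo hxU] using h

theorem iteratedFDeriv_smul_eq_zero {f : E → 𝕜} {g : E → F} {k l n : ℕ}
    (hf : ContDiffAt 𝕜 n f x) (hg : ContDiffAt 𝕜 n g x)
    (hf₀ : ∀ i ≤ n, i < k → iteratedFDeriv 𝕜 i f x = 0)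
    (hg₀ : ∀ i ≤ n, i < l → iteratedFDeriv 𝕜 i g x = 0) (hn : n < k + l) :
    iteratedFDeriv 𝕜 n (fun y => f y • g y) x = 0 := by
  rw [← norm_le_zero_iff]
  refine (norm_iteratedFDeriv_smul_le_of_contDiffAt hf hg).trans
    (Finset.sum_eq_zero fun i hi => ?_).le
  have hin : i ≤ n := Finset.mem_range_succ_iff.1 hi
  rcases lt_or_ge i k with hik | hki
  · simp [hf₀ i hin hik]
  · simp [hg₀ (n - i) (by omega) (by omega)]

theorem iteratedFDeriv_pow_smul_eq_zero {f : E → 𝕜} {g : E → F} {m n : ℕ}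
    (hf : ContDiffAt 𝕜 n f x) (hg : ContDiffAt 𝕜 n g x) (hfx : f x = 0) (hnm : n < m) :
    iteratedFDeriv 𝕜 n (fun y => f y ^ m • g y) x = 0 := by
  induction m generalizing n with
  | zero => omega
  | succ m ih =>
    simp only [pow_succ', mul_smul]
    refine iteratedFDeriv_smul_eq_zero (k := 1) (l := m) hf ((hf.pow m).smul hg) ?_ ?_ (by omega)
    · rintro i - hi
      obtain rfl := Nat.lt_one_iff.1 hi
      rw [← norm_eq_zero, norm_iteratedFDeriv_zero, hfx, norm_zero]
    · exact fun i hin him => ih (hf.of_le (mod_cast hin)) (hg.of_le (mod_cast hin)) him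

end VanishingOrder

theorem exists_contDiff_eventuallyEq_of_contDiffOn {E F : Type*} [NormedAddCommGroup E]
    [NormedSpace ℝ E] [HasContDiffBump E] [NormedAddCommGroup F] [NormedSpace ℝ F]
    {f : E → F} {U : Set E} {x : E} {n : ℕ∞} (hf : ContDiffOn ℝ n f U) (hU : U ∈ 𝓝 x) :
    ∃ g : E → F, ContDiff ℝ n g ∧ g =ᶠ[𝓝 x] f := by
  obtain ⟨r, hr, hrU⟩ := Metric.mem_nhds_iff.1 hU
  let b : ContDiffBump x := ⟨r / 3, r / 2, by positivity, by linarith⟩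
  refine ⟨fun y => b y • f y, contDiff_iff_contDiffAt.2 fun y => ?_, ?_⟩
  · by_cases hy : y ∈ Metric.ball x r
    · exact b.contDiffAt.smul (hf.contDiffAt (mem_of_superset (Metric.isOpen_ball.mem_nhds hy) hrU))
    · have hyb : y ∉ tsupport b := by
        rw [b.tsupport_eq]
        exact fun h => hy (Metric.closedBall_subset_ball (half_lt_self hr) h)
      refine contDiffAt_const (c := (0 : F)) |>.congr_of_eventuallyEq ?_
      filter_upwards [notMem_tsupport_iff_eventuallyEq.1 hyb] with z hz
      simp [hz]
  · filter_upwards [b.eventuallyEq_one] with y hy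
    simp [hy]

theorem AEquiv.of_contDiffOn {f g φ ψ : ℝ × ℝ → ℝ × ℝ} {U : Set (ℝ × ℝ)} (hU : U ∈ 𝓝 0)
    (hφ : ContDiffOn ℝ (⊤ : ℕ∞) φ U) (hψ : ContDiff ℝ (⊤ : ℕ∞) ψ) (hφ₀ : φ 0 = 0) (hψ₀ : ψ 0 = 0)
    (hφ' : Function.Bijective ⇑(fderiv ℝ φ 0)) (hψ' : Function.Bijective ⇑(fderiv ℝ ψ 0))
    (hfg : ∀ p ∈ U, ψ (f (φ p)) = g p) : AEquiv f g := by
  obtain ⟨φ', hφ'_smooth, hφ'φ⟩ := exists_contDiff_eventuallyEq_of_contDiffOn hφ hU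
  have hderiv : fderiv ℝ φ' 0 = fderiv ℝ φ 0 := hφ'φ.fderiv_eq
  refine ⟨φ', ψ, hφ'_smooth, hψ, hφ'φ.eq_of_nhds.trans hφ₀, hψ₀, hderiv ▸ hφ', hψ', ?_⟩
  filter_upwards [hφ'φ, hU] with p hp hpU
  rw [hp, hfg p hpU]

theorem AEquiv.jetEquiv {f g : ℝ × ℝ → ℝ × ℝ} (h : AEquiv f g) (r : ℕ) : JetEquiv r f g := by
  obtain ⟨φ, ψ, hφ, hψ, hφ₀, hψ₀, hφ', hψ', hfg⟩ := h
  exact ⟨φ, ψ, hφ, hψ, hφ₀, hψ₀, hφ', hψ', fun i _ =>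
    (EventuallyEq.iteratedFDeriv ℝ (f₁ := ψ ∘ f ∘ φ) hfg i).eq_of_nhds⟩

theorem JetEquiv.congr_right {f g h : ℝ × ℝ → ℝ × ℝ} {r : ℕ} (hfg : JetEquiv r f g)
    (hgh : ∀ i ≤ r, iteratedFDeriv ℝ i g 0 = iteratedFDeriv ℝ i h 0) : JetEquiv r f h := by
  obtain ⟨φ, ψ, hφ, hψ, hφ₀, hψ₀, hφ', hψ', hjet⟩ := hfg
  exact ⟨φ, ψ, hφ, hψ, hφ₀, hψ₀, hφ', hψ', fun i hi => (hjet i hi).trans (hgh i hi)⟩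

/-- The map `(x, y) ↦ (x, x y + f y)`, which sweeps out the family of lines with slope `y` and
intercept `f y`. -/
def lineFamily (f : ℝ → ℝ) (p : ℝ × ℝ) : ℝ × ℝ := (p.1, p.1 * p.2 + f p.2)

/-- The linear automorphism `(x, y) ↦ (x + a y, y)` of the plane. -/
def shear (a : ℝ) : (ℝ × ℝ) ≃L[ℝ] ℝ × ℝ :=
  (ContinuousLinearEquiv.prodComm ℝ ℝ ℝ).trans <|
    ((ContinuousLinearEquiv.refl ℝ ℝ).skewProd (.refl ℝ ℝ) (a • .id ℝ ℝ)).trans <|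
      ContinuousLinearEquiv.prodComm ℝ ℝ ℝ

theorem shear_apply (a : ℝ) (p : ℝ × ℝ) : shear a p = (p.1 + a * p.2, p.2) := by
  simp [shear]

/-- The intercept, as a function of the slope `y`, of the image under `shear a` of the family of
lines with intercept `f`. It is meaningful where `1 - a y ≠ 0`, in particular near `y = 0`. -/
def shearIntercept (a : ℝ) (f : ℝ → ℝ) (y : ℝ) : ℝ := (1 - a * y) * f (y / (1 - a * y))

/-- The reparametrisation of the source that expresses `shear a ∘ lineFamily f` in terms of the
slopes of the sheared lines. It is meaningful where `1 - a * p.2 ≠ 0`. -/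
def shearReparam (a : ℝ) (f : ℝ → ℝ) (p : ℝ × ℝ) : ℝ × ℝ :=
  ((1 - a * p.2) * (p.1 - a * f (p.2 / (1 - a * p.2))), p.2 / (1 - a * p.2))

section Shear

variable {a : ℝ} {f : ℝ → ℝ}

theorem shear_lineFamily_shearReparam {p : ℝ × ℝ} (hp : 1 - a * p.2 ≠ 0) :
    shear a (lineFamily f (shearReparam a f p)) = lineFamily (shearIntercept a f) p := by
  simp only [shear_apply, lineFamily, shearReparam, shearIntercept, Prod.mk.injEq]
  constructor <;> field_simp <;> ring

theorem contDiffOn_shearReparam {n : WithTop ℕ∞} (hf : ContDiff ℝ n f) :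
    ContDiffOn ℝ n (shearReparam a f) {p | 1 - a * p.2 ≠ 0} := by
  have hden : ContDiffOn ℝ n (fun p : ℝ × ℝ => 1 - a * p.2) {p | 1 - a * p.2 ≠ 0} := by fun_prop
  have hslope := contDiff_snd.contDiffOn.div hden fun _ hp => hp
  exact (hden.mul (contDiff_fst.contDiffOn.sub (contDiffOn_const.mul
    (hf.comp_contDiffOn hslope)))).prodMk hslope

theorem hasFDerivAt_shearReparam {f' : ℝ} (hf : HasDerivAt f f' 0) (hf₀ : f 0 = 0) :
    HasFDerivAt (shearReparam a f) (shear (-(a * f')) : ℝ × ℝ →L[ℝ] ℝ × ℝ) 0 := by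
  have hden : HasDerivAt (fun y : ℝ => 1 - a * y) (-a) 0 := by
    simpa using ((hasDerivAt_id (0 : ℝ)).const_mul a).const_sub 1
  have hslope : HasDerivAt (fun y : ℝ => y / (1 - a * y)) 1 0 := by
    simpa using (hasDerivAt_id (0 : ℝ)).fun_div hden (by simp)
  have hcomp : HasDerivAt (fun y : ℝ => f (y / (1 - a * y))) f' 0 := by
    simpa [Function.comp_def] using hf.comp_of_eq (0 : ℝ) hslope (by simp)
  have hsnd := hasFDerivAt_snd (𝕜 := ℝ) (p := (0 : ℝ × ℝ))
  have hfst := hasFDerivAt_fst (𝕜 := ℝ) (p := (0 : ℝ × ℝ))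
  have h := ((hden.comp_hasFDerivAt (0 : ℝ × ℝ) hsnd).mul (hfst.sub
    ((hcomp.comp_hasFDerivAt (0 : ℝ × ℝ) hsnd).const_mul a))).prodMk
      (hslope.comp_hasFDerivAt (0 : ℝ × ℝ) hsnd)
  refine h.congr_fderiv ?_
  ext <;> simp [shear_apply, hf₀]

theorem aEquiv_lineFamily_shearIntercept (a : ℝ) (hf : ContDiff ℝ (⊤ : ℕ∞) f) (hf₀ : f 0 = 0) :
    AEquiv (lineFamily f) (lineFamily (shearIntercept a f)) := by
  have hφ := hasFDerivAt_shearReparam (a := a)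
    (hf.differentiable (by simp) |>.differentiableAt.hasDerivAt) hf₀
  have hU : {p : ℝ × ℝ | 1 - a * p.2 ≠ 0} ∈ 𝓝 0 :=
    (isOpen_ne_fun (by fun_prop) (by fun_prop)).mem_nhds (by simp)
  refine .of_contDiffOn hU (contDiffOn_shearReparam hf) (shear a).contDiff
    (by simp [shearReparam, hf₀]) (map_zero _) ?_ ?_ fun p hp => shear_lineFamily_shearReparam hp
  · rw [hφ.fderiv]
    exact (shear _).bijective
  · rw [(shear a).fderiv]
    exact (shear a).bijective

end Shear

theorem iteratedFDeriv_lineFamily_eq {f g r : ℝ → ℝ} {m n : ℕ} (hg : ContDiffAt ℝ n g 0)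
    (hr : ContDiffAt ℝ n r 0) (hfg : ∀ᶠ y in 𝓝 0, f y = g y + y ^ m * r y) (hnm : n < m) :
    iteratedFDeriv ℝ n (lineFamily f) 0 = iteratedFDeriv ℝ n (lineFamily g) 0 := by
  have hsnd : Tendsto (Prod.snd : ℝ × ℝ → ℝ) (𝓝 0) (𝓝 0) := continuous_snd.tendsto 0
  have heq : lineFamily f =ᶠ[𝓝 0] fun p => lineFamily g p + p.2 ^ m • ((0 : ℝ), r p.2) := by
    filter_upwards [hsnd.eventually hfg] with p hp
    simp [lineFamily, hp, add_assoc]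
  have hg' : ContDiffAt ℝ n (fun p : ℝ × ℝ => g p.2) 0 := hg.comp (0 : ℝ × ℝ) contDiffAt_snd
  have hr' : ContDiffAt ℝ n (fun p : ℝ × ℝ => ((0 : ℝ), r p.2)) 0 :=
    contDiffAt_const.prodMk (hr.comp (0 : ℝ × ℝ) contDiffAt_snd)
  have hrem : ContDiffAt ℝ n (fun p : ℝ × ℝ => p.2 ^ m • ((0 : ℝ), r p.2)) 0 :=
    (contDiffAt_snd.pow m).smul hr'
  have hlg : ContDiffAt ℝ n (lineFamily g) 0 :=
    contDiffAt_fst.prodMk ((contDiffAt_fst.mul contDiffAt_snd).add hg')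
  rw [(heq.iteratedFDeriv ℝ n).eq_of_nhds, fun_iteratedFDeriv_add_apply hlg hrem,
    iteratedFDeriv_pow_smul_eq_zero contDiffAt_snd hr' rfl hnm, add_zero]

/-- The polynomial `y⁶ + c y⁷ + d y⁸ + e y⁹`, the general 9-jet of a monic germ of order six. -/
def orderSixJet (c d e y : ℝ) : ℝ := y ^ 6 + c * y ^ 7 + d * y ^ 8 + e * y ^ 9

theorem contDiff_orderSixJet (c d e : ℝ) {n : WithTop ℕ∞} : ContDiff ℝ n (orderSixJet c d e) := by
  unfold orderSixJet; fun_prop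

theorem exists_shearIntercept_orderSixJet_eq (a c d e : ℝ) :
    ∃ r : ℝ → ℝ, (∀ n, ContDiffAt ℝ n r 0) ∧ ∀ᶠ y in 𝓝 0,
      shearIntercept a (orderSixJet c d e) y = orderSixJet (c + 5 * a) (d + 6 * a * c + 15 * a ^ 2)
        (e + 7 * a * d + 21 * a ^ 2 * c + 35 * a ^ 3) y + y ^ 10 * r y := by
  set c' := c + 5 * a with hc
  set d' := d + 6 * a * c + 15 * a ^ 2 with hd
  set e' := e + 7 * a * d + 21 * a ^ 2 * c + 35 * a ^ 3 with he
  -- With `u = 1 - a y`, the polynomial `q` is the solution of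
  -- `u³ + c y u² + d y² u + e y³ = u⁸ (1 + c' y + d' y² + e' y³) + y⁴ q`.
  let q : ℝ → ℝ := fun y =>
    -((70 * a ^ 4 - 56 * a ^ 5 * y + 28 * a ^ 6 * y ^ 2 - 8 * a ^ 7 * y ^ 3 + a ^ 8 * y ^ 4) *
        (1 + c' * y + d' * y ^ 2 + e' * y ^ 3) +
      (-56 * a ^ 3 * c' + 28 * a ^ 2 * d' - 8 * a * e') +
      (-56 * a ^ 3 * d' + 28 * a ^ 2 * e') * y - 56 * a ^ 3 * e' * y ^ 2)
  refine ⟨fun y => q y / (1 - a * y) ^ 8, fun n => ?_, ?_⟩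
  · exact ContDiffAt.div (by fun_prop) (by fun_prop) (by simp)
  · have hne : ∀ᶠ y in 𝓝 (0 : ℝ), 1 - a * y ≠ 0 :=
      ContinuousAt.eventually_ne (by fun_prop) (by simp)
    filter_upwards [hne] with y hy
    simp only [shearIntercept, orderSixJet, q, hc, hd, he]
    field_simp
    ring

theorem stmt4 (c d e : ℝ) :
    JetEquiv 9 (fun p => (p.1, p.1 * p.2 + p.2 ^ 6 + c * p.2 ^ 7 + d * p.2 ^ 8 + e * p.2 ^ 9))
      (fun p => (p.1, p.1 * p.2 + p.2 ^ 6 + (d - 3 / 5 * c ^ 2) * p.2 ^ 8 +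
        (e - 7 / 5 * c * d + 14 / 25 * c ^ 3) * p.2 ^ 9)) := by
  have hf : ContDiff ℝ (⊤ : ℕ∞) (orderSixJet c d e) := contDiff_orderSixJet c d e
  have hshear := aEquiv_lineFamily_shearIntercept (-c / 5) hf (by simp [orderSixJet])
  obtain ⟨r, hr, hexp⟩ := exists_shearIntercept_orderSixJet_eq (-c / 5) c d e
  have hjet := (hshear.jetEquiv 9).congr_right fun i hi =>
    iteratedFDeriv_lineFamily_eq (contDiff_orderSixJet _ _ _).contDiffAt (hr i) hexp (by omega)
  convert hjet using 2 with p p <;> simp only [lineFamily, orderSixJet] <;> ring_nf
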